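/- Let R be a discrete valuation ring with maximal ideal m and fraction field K, and let A be a finite flat R-algebra whose generic fiber A^K = K ⊗_R A is a split K-algebra. Then A is semiperfect; in particular, the quotient map A → A/mA is idempotent surjective, induces a bijection between the isomorphism classes of primitive idempotents of A and of A/mA, and is block bijective. -/

import Mathlib

open TensorProduct

section Defs
variable {B : Type*} [Ring B] {C : Type*} [Ring C]

/-- `e` is a centrally-primitive ("block") idempotent of the ring `B`. -/
def IsBlockIdem (e : B) : Prop :=
  IsIdempotentElem e ∧ e ≠ 0 ∧ (∀ x : B, e * x = x * e) ∧
    ∀ f g : B, (∀ x : B, f * x = x * f) → (∀ x : B, g * x = x * g) →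
      IsIdempotentElem f → IsIdempotentElem g → f * g = 0 → f + g = e → f = 0 ∨ g = 0

/-- `e` is a primitive idempotent of `B`. -/
def IsPrimIdem (e : B) : Prop :=
  IsIdempotentElem e ∧ e ≠ 0 ∧
    ∀ f g : B, IsIdempotentElem f → IsIdempotentElem g →
      f * g = 0 → g * f = 0 → f + g = e → f = 0 ∨ g = 0

/-- Two idempotents `e, f` are isomorphic (`Be ≅ Bf` as left modules). -/
def IdemIso (e f : B) : Prop :=
  ∃ a b : B, a * b = e ∧ b * a = f ∧ a = e * a * f ∧ b = f * b * e

/-- A map of rings is block bijective if it restricts to a bijection between the sets of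
centrally-primitive idempotents. -/
def BlockBijective (φ : B → C) : Prop :=
  Set.BijOn φ {e | IsBlockIdem e} {e | IsBlockIdem e}

/-- A map of rings induces a bijection between the isomorphism classes of primitive idempotents. -/
def PrimIdemBijective (φ : B → C) : Prop :=
  (∀ e, IsPrimIdem e → IsPrimIdem (φ e)) ∧
  (∀ e f, IsPrimIdem e → IsPrimIdem f → (IdemIso e f ↔ IdemIso (φ e) (φ f))) ∧
  (∀ f', IsPrimIdem f' → ∃ e, IsPrimIdem e ∧ IdemIso (φ e) f')

/-- A ring `B` is semiperfect if `B/Rad(B)` is semisimple and every idempotent of `B/Rad(B)`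
lifts to an idempotent of `B`, where `Rad` denotes the Jacobson radical. -/
def IsSemiperfect (B : Type*) [Ring B] : Prop :=
  IsSemisimpleRing ((⊥ : TwoSidedIdeal B).jacobson.ringCon.Quotient) ∧
  ∀ f : (⊥ : TwoSidedIdeal B).jacobson.ringCon.Quotient, IsIdempotentElem f →
    ∃ e : B, IsIdempotentElem e ∧ RingCon.mk' (⊥ : TwoSidedIdeal B).jacobson.ringCon e = f

end Defs

universe u v

def IsSplitAlgebra (K : Type u) (B : Type v) [Field K] [Ring B] [Algebra K B] : Prop :=
  ∀ (S : Type v) [AddCommGroup S] [Module B S], IsSimpleModule B S →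
    ∀ f : S →ₗ[B] S, ∃ k : K, ∀ s : S, f s = algebraMap K B k • s

/-!
Let `p` be a uniformizer of `R`. The kernel of `A → A/pA` lies in the Jacobson radical of `A`, and
the reduction `A/pA` is Artinian, so everything follows once idempotents are known to lift from
`A/pA` to `A`.

As `K ⊗ A` is split, it maps onto a product of matrix algebras over `K` with nilpotent kernel.
Choosing an `A`-stable lattice in each factor gives a map `ψ : A → Λ` with nilpotent kernel, where
`Λ` is a product of endomorphism rings of free `R`-modules, and `p ^ c • Λ ⊆ ψ(A)` for some `c`.
Idempotents lift modulo every power of `p` in `Λ`. Given `a : A` idempotent modulo `p`, Newton's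
iteration replaces it by one that is idempotent modulo `p ^ (c + 1)`. The idempotent of `Λ` which
is congruent to its image modulo `p ^ (c + 1)` then lies in `ψ(A)`, hence lifts to an idempotent
of `A`; that lift is conjugate to `a` modulo `p`, and the conjugating unit lifts to `A`.
-/

/-- `φ` is idempotent surjective: every idempotent of the target lifts to an idempotent. -/
def IdempotentSurjective {A C : Type*} [Ring A] [Ring C] (φ : A →+* C) : Prop :=
  ∀ f : C, IsIdempotentElem f → ∃ e : A, IsIdempotentElem e ∧ φ e = f

section LocalHom

variable {A C D : Type*} [Ring A] [Ring C] [Ring D] {φ : A →+* C}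

theorem IdempotentSurjective.comp {χ : C →+* D} (hχ : IdempotentSurjective χ)
    (hφ : IdempotentSurjective φ) : IdempotentSurjective (χ.comp φ) := by
  intro f hf
  obtain ⟨c, hc, rfl⟩ := hχ f hf
  obtain ⟨e, he, rfl⟩ := hφ c hc
  exact ⟨e, he, rfl⟩

theorem isIdempotentElem_conj {e : A} (he : IsIdempotentElem e) (u : Aˣ) :
    IsIdempotentElem (↑u⁻¹ * e * u : A) := by
  simp only [IsIdempotentElem, mul_assoc, Units.mul_inv_cancel_left]
  rw [← mul_assoc e e, he.eq]

theorem map_eq_zero_iff_of_idempotent [IsLocalHom φ] {e : A} (he : IsIdempotentElem e) :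
    φ e = 0 ↔ e = 0 := by
  refine ⟨fun h => ?_, fun h => h ▸ map_zero φ⟩
  have hunit : IsUnit (1 - e) := isUnit_of_map_unit φ _ (by simp [h])
  exact hunit.mul_right_eq_zero.mp he.one_sub_mul_self

theorem mul_eq_left_of_map_eq [IsLocalHom φ] {e f : A} (he : IsIdempotentElem e)
    (hf : IsIdempotentElem f) (hef : Commute e f) (h : φ e = φ f) : e * f = e := by
  have h0 : e * (1 - f) = 0 := (map_eq_zero_iff_of_idempotent (φ := φ)
    (.mul_of_commute ((Commute.one_right e).sub_right hef) he hf.one_sub)).mp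
    (by simp [h, mul_sub, (hf.map φ).eq])
  rwa [mul_sub, mul_one, sub_eq_zero, eq_comm] at h0

theorem idempotent_eq_of_map_eq [IsLocalHom φ] {e f : A} (he : IsIdempotentElem e)
    (hf : IsIdempotentElem f) (hef : Commute e f) (h : φ e = φ f) : e = f := by
  rw [← mul_eq_left_of_map_eq he hf hef h, hef.eq, mul_eq_left_of_map_eq hf he hef.symm h.symm]

-- The unit is `u = e * a + (1 - e) * (1 - a)`: it satisfies `e * u = e * a`, and
-- `u * a = e * a` holds after applying `φ`.
theorem exists_isIdempotentElem_map_eq_of_isUnit [IsLocalHom φ] {e a : A}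
    (he : IsIdempotentElem e) (ha : IsIdempotentElem (φ a))
    (hu : IsUnit (φ (e * a + (1 - e) * (1 - a)))) :
    ∃ e' : A, IsIdempotentElem e' ∧ φ e' = φ a := by
  obtain ⟨u, hu⟩ := isUnit_of_map_unit φ _ hu
  have he_u : e * u = e * a := by
    rw [hu, mul_add, ← mul_assoc, ← mul_assoc, he.eq, he.mul_one_sub_self, zero_mul, add_zero]
  have hu_a : φ (u * a) = φ (e * a) := by
    simp only [hu, map_mul, map_add, map_sub, map_one, add_mul, mul_assoc, ha.eq, sub_mul _ _ (φ a),
      one_mul, sub_self, mul_zero, add_zero]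
  refine ⟨↑u⁻¹ * e * u, isIdempotentElem_conj he u, ?_⟩
  rw [mul_assoc, he_u, map_mul, ← hu_a, ← map_mul, Units.inv_mul_cancel_left]

theorem exists_units_mul_eq_of_map_eq [IsLocalHom φ] {e y : A} (he : IsIdempotentElem e)
    (hey : e * y = y) (hye : y * e = y) (h : φ y = φ e) :
    ∃ u : Aˣ, e * u = y ∧ Commute e u ∧ φ ↑u⁻¹ = 1 := by
  have hone : φ (y + (1 - e)) = 1 := by simp [h]
  obtain ⟨u, hu⟩ := isUnit_of_map_unit φ (y + (1 - e)) (hone ▸ isUnit_one)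
  have heu : e * u = y := by simp [hu, mul_add, hey, mul_sub, he.eq]
  have hue : u * e = y := by simp [hu, add_mul, hye, sub_mul, he.eq]
  refine ⟨u, heu, heu.trans hue.symm, ?_⟩
  have hinv := congrArg φ u.mul_inv
  rwa [map_mul, hu, hone, one_mul, map_one] at hinv

-- `ab` is a unit of the corner `eAe`, so `b` can be divided by it.
theorem exists_mul_eq_of_map_mul_eq [IsLocalHom φ] {e f a b : A} (he : IsIdempotentElem e)
    (hea : e * a = a) (hfb : f * b = b) (hbe : b * e = b) (h : φ (a * b) = φ e) :
    ∃ c : A, a * c = e ∧ f * c = c ∧ c * e = c ∧ φ c = φ b := by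
  obtain ⟨u, heu, hcomm, hu⟩ := exists_units_mul_eq_of_map_eq he (by rw [← mul_assoc, hea])
    (by rw [mul_assoc, hbe]) h
  refine ⟨b * ↑u⁻¹, ?_, by rw [← mul_assoc, hfb], ?_, by rw [map_mul, hu, mul_one]⟩
  · rw [← mul_assoc, ← heu, Units.mul_inv_cancel_right]
  · rw [mul_assoc, ← hcomm.units_inv_right.eq, ← mul_assoc, hbe]

theorem IdempotentSurjective.exists_corner_lift [IsLocalHom φ] (hφ : IdempotentSurjective φ)
    {e : A} {f : C} (he : IsIdempotentElem e) (hf : IsIdempotentElem f)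
    (hef : φ e * f = f) (hfe : f * φ e = f) :
    ∃ x : A, IsIdempotentElem x ∧ φ x = f ∧ e * x = x ∧ x * e = x := by
  obtain ⟨x, hx, rfl⟩ := hφ f hf
  obtain ⟨c, hxc, hec, hcx, hφc⟩ : ∃ c, x * e * c = x ∧ e * c = c ∧ c * x = c ∧ φ c = φ (e * x) :=
    exists_mul_eq_of_map_mul_eq hx (by rw [← mul_assoc, hx.eq]) (by rw [← mul_assoc, he.eq])
      (by rw [mul_assoc, hx.eq]) (by simp only [map_mul, hef, hfe, hx.map φ |>.eq])
  refine ⟨c * e, ?_, ?_, by rw [← mul_assoc, hec], by rw [mul_assoc, he.eq]⟩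
  · calc c * e * (c * e) = c * x * e * c * e := by rw [hcx]; simp only [mul_assoc]
      _ = c * (x * e * c) * e := by simp only [mul_assoc]
      _ = c * e := by rw [hxc, hcx]
  · rw [map_mul, hφc, map_mul, hef, hfe]

end LocalHom

section PrimitiveIdempotents

variable {A C : Type*} [Ring A] [Ring C] {φ : A →+* C}

theorem isPrimIdem_iff {e : A} : IsPrimIdem e ↔ IsIdempotentElem e ∧ e ≠ 0 ∧
    ∀ f, IsIdempotentElem f → e * f = f → f * e = f → f = 0 ∨ f = e := by
  refine and_congr_right fun he => and_congr_right fun _ => ⟨fun h f hf hef hfe => ?_,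
    fun h f g hf _ hfg hgf hadd => ?_⟩
  · refine (h f (e - f) hf (hf.sub he hfe hef) ?_ ?_ (add_sub_cancel f e)).imp_right
      fun h0 => (sub_eq_zero.mp h0).symm
    · rw [mul_sub, hfe, hf.eq, sub_self]
    · rw [sub_mul, hef, hf.eq, sub_self]
  · refine (h f hf ?_ ?_).imp_right fun hfe => by simpa [hfe] using hadd
    · rw [← hadd, add_mul, hf.eq, hgf, add_zero]
    · rw [← hadd, mul_add, hf.eq, hfg, add_zero]

theorem isPrimIdem_map_iff [IsLocalHom φ] (hφ : IdempotentSurjective φ) {e : A}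
    (he : IsIdempotentElem e) : IsPrimIdem (φ e) ↔ IsPrimIdem e := by
  simp only [isPrimIdem_iff, he, he.map φ, true_and]
  refine and_congr (map_eq_zero_iff_of_idempotent he).not
    ⟨fun h f hf hef hfe => ?_, fun h f hf hef hfe => ?_⟩
  · exact (h (φ f) (hf.map φ) (by rw [← map_mul, hef]) (by rw [← map_mul, hfe])).imp
      (map_eq_zero_iff_of_idempotent hf).mp
      (idempotent_eq_of_map_eq hf he (hfe.trans hef.symm))
  · obtain ⟨x, hx, rfl, hex, hxe⟩ := hφ.exists_corner_lift he hf hef hfe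
    exact (h x hx hex hxe).imp (map_eq_zero_iff_of_idempotent hx).mpr (congrArg φ)

theorem IdemIso.refl {e : A} (he : IsIdempotentElem e) : IdemIso e e :=
  ⟨e, e, he, he, by rw [he.eq, he.eq], by rw [he.eq, he.eq]⟩

theorem IdemIso.map {e f : A} (h : IdemIso e f) (φ : A →+* C) : IdemIso (φ e) (φ f) := by
  obtain ⟨a, b, hab, hba, ha, hb⟩ := h
  refine ⟨φ a, φ b, ?_, ?_, ?_, ?_⟩ <;> simp only [← map_mul, hab, hba, ← ha, ← hb]

theorem IdemIso.of_map [IsLocalHom φ] (hs : Function.Surjective φ) {e f : A}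
    (he : IsIdempotentElem e) (hf : IsIdempotentElem f) (h : IdemIso (φ e) (φ f)) :
    IdemIso e f := by
  obtain ⟨a', b', hab, hba, ha, hb⟩ := h
  obtain ⟨a, hea, haf, rfl⟩ : ∃ a, e * a = a ∧ a * f = a ∧ φ a = a' := by
    obtain ⟨a, rfl⟩ := hs a'
    refine ⟨e * a * f, by simp only [← mul_assoc, he.eq], by rw [mul_assoc, hf.eq], ?_⟩
    simp only [map_mul, ← ha]
  obtain ⟨b, hfb, hbe, rfl⟩ : ∃ b, f * b = b ∧ b * e = b ∧ φ b = b' := by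
    obtain ⟨b, rfl⟩ := hs b'
    refine ⟨f * b * e, by simp only [← mul_assoc, hf.eq], by rw [mul_assoc, he.eq], ?_⟩
    simp only [map_mul, ← hb]
  obtain ⟨c, hac, hfc, hce, hφc⟩ :=
    exists_mul_eq_of_map_mul_eq (φ := φ) he hea hfb hbe (by rw [map_mul, hab])
  have hca : IsIdempotentElem (c * a) := by
    rw [IsIdempotentElem, mul_assoc, ← mul_assoc a, hac, hea]
  have hca_f : c * a = f := by
    refine idempotent_eq_of_map_eq (φ := φ) hca hf ?_ (by rw [map_mul, hφc, hba])
    rw [Commute, SemiconjBy, mul_assoc, haf, ← mul_assoc, hfc]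
  exact ⟨a, c, hac, hca_f, by rw [hea, haf], by rw [hfc, hce]⟩

theorem IdempotentSurjective.primIdemBijective [IsLocalHom φ] (hφ : IdempotentSurjective φ)
    (hs : Function.Surjective φ) : PrimIdemBijective φ := by
  refine ⟨fun e he => (isPrimIdem_map_iff hφ he.1).mpr he,
    fun e f he hf => ⟨fun h => h.map φ, IdemIso.of_map hs he.1 hf.1⟩, fun f' hf' => ?_⟩
  obtain ⟨e, he, rfl⟩ := hφ f' hf'.1
  exact ⟨e, (isPrimIdem_map_iff hφ he).mp hf', .refl hf'.1⟩

end PrimitiveIdempotents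

section Blocks

variable {A C : Type*} [Ring A] [Ring C] {φ : A →+* C}

theorem isBlockIdem_iff {e : A} : IsBlockIdem e ↔ IsIdempotentElem e ∧ e ≠ 0 ∧
    (∀ x, Commute e x) ∧
    ∀ f, IsIdempotentElem f → (∀ x, Commute f x) → e * f = f → f = 0 ∨ f = e := by
  refine and_congr_right fun he => and_congr_right fun _ => and_congr_right fun hec =>
    ⟨fun h f hf hfc hef => ?_, fun h f g hfc hgc hf _ hfg hadd => ?_⟩
  · have hfe : f * e = f := (hec f).symm.trans hef
    refine (h f (e - f) hfc (fun x => Commute.sub_left (hec x) (hfc x)) hf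
      (hf.sub he hfe hef) ?_ (add_sub_cancel f e)).imp_right fun h0 => (sub_eq_zero.mp h0).symm
    rw [mul_sub, hfe, hf.eq, sub_self]
  · refine (h f hf hfc ?_).imp_right fun hfe => by simpa [hfe] using hadd
    rw [← hadd, add_mul, hf.eq, hgc, hfg, add_zero]

theorem commute_map_of_surjective (hs : Function.Surjective φ) {e : A}
    (he : ∀ x, Commute e x) (y : C) : Commute (φ e) y := by
  obtain ⟨x, rfl⟩ := hs y
  exact (he x).map φ

theorem isBlockIdem_map_iff [IsLocalHom φ] (hφ : IdempotentSurjective φ)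
    (hs : Function.Surjective φ)
    (hcentral : ∀ e, IsIdempotentElem e → (∀ y, Commute (φ e) y) → ∀ x, Commute e x)
    {e : A} (he : IsIdempotentElem e) : IsBlockIdem (φ e) ↔ IsBlockIdem e := by
  simp only [isBlockIdem_iff, he, he.map φ, true_and]
  refine and_congr (map_eq_zero_iff_of_idempotent he).not ⟨?_, ?_⟩
  · rintro ⟨hec, h⟩
    have hec := hcentral e he hec
    refine ⟨hec, fun f hf hfc hef => ?_⟩
    exact (h (φ f) (hf.map φ) (commute_map_of_surjective hs hfc) (by rw [← map_mul, hef])).imp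
      (map_eq_zero_iff_of_idempotent hf).mp (idempotent_eq_of_map_eq hf he (hfc e))
  · rintro ⟨hec, h⟩
    refine ⟨commute_map_of_surjective hs hec, fun f hf hfc hef => ?_⟩
    obtain ⟨x, hx, rfl, hex, -⟩ :=
      hφ.exists_corner_lift he hf hef ((hfc (φ e)).eq.trans hef)
    exact (h x hx (hcentral x hx hfc) hex).imp (map_eq_zero_iff_of_idempotent hx).mpr (congrArg φ)

theorem IdempotentSurjective.blockBijective [IsLocalHom φ] (hφ : IdempotentSurjective φ)
    (hs : Function.Surjective φ)
    (hcentral : ∀ e, IsIdempotentElem e → (∀ y, Commute (φ e) y) → ∀ x, Commute e x) :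
    BlockBijective φ := by
  refine ⟨fun e he => (isBlockIdem_map_iff hφ hs hcentral he.1).mpr he,
    fun e he f hf h => idempotent_eq_of_map_eq he.1 hf.1 (he.2.2.1 f) h, fun f hf => ?_⟩
  obtain ⟨e, he, rfl⟩ := hφ f hf.1
  exact ⟨e, (isBlockIdem_map_iff hφ hs hcentral he).mp hf, rfl⟩

end Blocks

section Semiperfect

variable {A C D : Type*} [Ring A] [Ring C] [Ring D]

theorem ker_le_ringJacobson_of_isLocalHom (φ : A →+* C) [IsLocalHom φ] :
    RingHom.ker φ ≤ Ring.jacobson A := by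
  intro x hx
  rw [← Ideal.jacobson_bot, Ideal.mem_jacobson_iff]
  intro y
  have hφ : φ (y * x + 1) = 1 := by simp [RingHom.mem_ker.mp hx]
  obtain ⟨u, hu⟩ := isUnit_of_map_unit φ (y * x + 1) (hφ ▸ isUnit_one)
  have hinv : ↑u⁻¹ * y * x + ↑u⁻¹ = (1 : A) := by
    rw [mul_assoc, ← mul_add_one, ← hu, Units.inv_mul]
  exact ⟨↑u⁻¹, by simp [hinv]⟩

theorem mem_twoSidedIdeal_jacobson_bot_iff {x : A} :
    x ∈ (⊥ : TwoSidedIdeal A).jacobson ↔ x ∈ Ring.jacobson A := by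
  rw [← Ideal.jacobson_bot, TwoSidedIdeal.mem_jacobson_iff, Ideal.mem_jacobson_iff]
  simp only [TwoSidedIdeal.mem_bot, Ideal.mem_bot]

theorem mk'_jacobson_eq_iff {x y : A} :
    RingCon.mk' (⊥ : TwoSidedIdeal A).jacobson.ringCon x =
      RingCon.mk' (⊥ : TwoSidedIdeal A).jacobson.ringCon y ↔ x - y ∈ Ring.jacobson A := by
  rw [← mem_twoSidedIdeal_jacobson_bot_iff, ← TwoSidedIdeal.rel_iff]
  exact RingCon.eq _

theorem ker_eq_ringJacobson [IsSemisimpleRing D] (q : A →+* D) [IsLocalHom q]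
    (hq : Function.Surjective q) : RingHom.ker q = Ring.jacobson A := by
  refine (ker_le_ringJacobson_of_isLocalHom q).antisymm ?_
  have : RingHomSurjective q := ⟨hq⟩
  refine (Ring.le_comap_jacobson q).trans_eq ?_
  rw [IsSemisimpleRing.jacobson_eq_bot]
  rfl

theorem isSemiperfect_of_isSemisimpleRing [IsSemisimpleRing D] {q : A →+* D} [IsLocalHom q]
    (hq : IdempotentSurjective q) (hs : Function.Surjective q) : IsSemiperfect A := by
  have hker := ker_eq_ringJacobson q hs
  constructor
  · have := RingHom.isSemisimpleRing_of_surjective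
      (RingHom.quotientKerEquivOfSurjective hs).symm.toRingHom
      (RingHom.quotientKerEquivOfSurjective hs).symm.surjective
    refine RingHom.isSemisimpleRing_of_surjective
      (Ideal.Quotient.lift (RingHom.ker q) (RingCon.mk' _) fun x hx => ?_)
      (Ideal.Quotient.lift_surjective_of_surjective _ _ (RingCon.mk'_surjective _))
    rw [← map_zero (RingCon.mk' _), mk'_jacobson_eq_iff, sub_zero, ← hker]
    exact hx
  · intro f hf
    obtain ⟨a, rfl⟩ := RingCon.mk'_surjective _ f
    have ha : IsIdempotentElem (q a) := by
      rw [IsIdempotentElem, ← map_mul, ← sub_eq_zero, ← map_sub, ← RingHom.mem_ker, hker,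
        ← mk'_jacobson_eq_iff, map_mul, hf.eq]
    obtain ⟨e, he, hea⟩ := hq (q a) ha
    refine ⟨e, he, mk'_jacobson_eq_iff.mpr ?_⟩
    rw [← hker, RingHom.mem_ker, map_sub, hea, sub_self]

theorem isNilpotent_of_mem_ringJacobson [IsSemiprimaryRing C] {x : C}
    (hx : x ∈ Ring.jacobson C) : IsNilpotent x := by
  obtain ⟨n, hn⟩ := IsSemiprimaryRing.isNilpotent (R := C)
  exact ⟨n, by simpa [hn] using Ideal.pow_mem_pow hx n⟩

theorem isLocalHom_of_exists_mul_eq_one {φ : A →+* C}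
    (h : ∀ a, IsUnit (φ a) → ∃ b, a * b = 1) : IsLocalHom φ where
  map_nonunit a ha := by
    obtain ⟨b, hab⟩ := h a ha
    have hb : IsUnit (φ b) := ha.mul_left_iff.mp (by rw [← map_mul, hab, map_one]; exact isUnit_one)
    obtain ⟨c, hbc⟩ := h b hb
    exact ⟨⟨a, b, hab, left_inv_eq_right_inv hab hbc ▸ hbc⟩, rfl⟩

theorem isLocalHom_of_surjective_of_isNilpotent {φ : A →+* C} (hs : Function.Surjective φ)
    (hnil : ∀ x, φ x = 0 → IsNilpotent x) : IsLocalHom φ := by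
  refine isLocalHom_of_exists_mul_eq_one ?_
  rintro a ⟨u, hu⟩
  obtain ⟨b, hb⟩ := hs ↑u⁻¹
  obtain ⟨v, hv⟩ := (hnil (a * b - 1) (by simp [← hu, hb])).isUnit_one_add
  rw [add_sub_cancel] at hv
  exact ⟨b * ↑v⁻¹, by rw [← mul_assoc, ← hv, Units.mul_inv]⟩

theorem isLocalHom_mk_ringJacobson [IsSemiprimaryRing C] :
    IsLocalHom (Ideal.Quotient.mk (Ring.jacobson C)) :=
  isLocalHom_of_surjective_of_isNilpotent Ideal.Quotient.mk_surjective fun _ hx =>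
    isNilpotent_of_mem_ringJacobson (Ideal.Quotient.eq_zero_iff_mem.mp hx)

theorem idempotentSurjective_mk_ringJacobson [IsSemiprimaryRing C] :
    IdempotentSurjective (Ideal.Quotient.mk (Ring.jacobson C)) := fun f hf =>
  exists_isIdempotentElem_eq_of_ker_isNilpotent _
    (fun _ hx => isNilpotent_of_mem_ringJacobson (Ideal.mk_ker.le hx)) f
    (Ideal.Quotient.mk_surjective f) hf

theorem IdempotentSurjective.isSemiperfect [IsSemiprimaryRing C] {φ : A →+* C} [IsLocalHom φ]
    (hφ : IdempotentSurjective φ) (hs : Function.Surjective φ) : IsSemiperfect A :=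
  have := isLocalHom_mk_ringJacobson (C := C)
  have : IsLocalHom ((Ideal.Quotient.mk (Ring.jacobson C)).comp φ) := RingHom.isLocalHom_comp _ _
  isSemiperfect_of_isSemisimpleRing (idempotentSurjective_mk_ringJacobson.comp hφ)
    (Ideal.Quotient.mk_surjective.comp hs)

end Semiperfect

section FiniteAlgebra

variable {R A : Type*} [CommRing R] [Ring A] [Algebra R A] {I : Ideal R}

theorem includeRight_eq_zero_iff {a : A} :
    (Algebra.TensorProduct.includeRight a : (R ⧸ I) ⊗[R] A) = 0 ↔
      a ∈ I • (⊤ : Submodule R A) := by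
  rw [← LinearMap.ker_tensorProductMk]
  rfl

theorem isLocalHom_includeRight [Module.Finite R A] (hI : I ≤ Ideal.jacobson ⊥) :
    IsLocalHom
      (Algebra.TensorProduct.includeRight : A →ₐ[R] (R ⧸ I) ⊗[R] A).toRingHom := by
  refine isLocalHom_of_exists_mul_eq_one ?_
  rintro a ⟨u, hu : (u : (R ⧸ I) ⊗[R] A) = Algebra.TensorProduct.includeRight a⟩
  obtain ⟨b, hb⟩ := Algebra.TensorProduct.includeRight_surjective A
    (Ideal.Quotient.mk_surjective (I := I)) ↑u⁻¹
  have hrange : ⊤ ≤ LinearMap.range (LinearMap.mulLeft R a) := by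
    refine Submodule.le_of_le_smul_of_le_jacobson_bot Module.Finite.fg_top hI fun x _ => ?_
    have hx : x - a * (b * x) ∈ I • (⊤ : Submodule R A) := by
      rw [← includeRight_eq_zero_iff, map_sub, map_mul, map_mul, hb, ← hu,
        Units.mul_inv_cancel_left, sub_self]
    rw [← add_sub_cancel (a * (b * x)) x]
    exact Submodule.add_mem_sup ⟨b * x, rfl⟩ hx
  exact hrange (Submodule.mem_top (x := 1))

theorem mul_mul_eq_zero_of_forall_mem_smul [Module.Finite R A] (hI : I ≤ Ideal.jacobson ⊥)
    {e f : A} (he : IsIdempotentElem e) (hf : IsIdempotentElem f)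
    (h : ∀ x, e * x * f ∈ I • (⊤ : Submodule R A)) (x : A) : e * x * f = 0 := by
  let corner : A →ₗ[R] A := LinearMap.mulLeftRight R (e, f)
  have hcorner : ∀ x, corner (corner x) = corner x := fun x => by
    simp [corner, ← mul_assoc, he.eq, mul_assoc _ f f, hf.eq]
  have hfg : (LinearMap.range corner).FG := by
    rw [LinearMap.range_eq_map]
    exact Module.Finite.fg_top.map corner
  have hbot : LinearMap.range corner = ⊥ := by
    refine Submodule.eq_bot_of_le_smul_of_le_jacobson_bot I _ hfg ?_ hI
    rintro _ ⟨x, rfl⟩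
    rw [← hcorner, LinearMap.range_eq_map, ← Submodule.map_smul'']
    exact Submodule.mem_map_of_mem (h x)
  exact LinearMap.congr_fun (LinearMap.range_eq_bot.mp hbot) x

theorem commute_of_commute_includeRight [Module.Finite R A] (hI : I ≤ Ideal.jacobson ⊥)
    {e : A} (he : IsIdempotentElem e)
    (h : ∀ y, Commute (Algebra.TensorProduct.includeRight e : (R ⧸ I) ⊗[R] A) y) (x : A) :
    Commute e x := by
  have hcomm (x : A) : e * x - x * e ∈ I • (⊤ : Submodule R A) := by
    rw [← includeRight_eq_zero_iff, map_sub, map_mul, map_mul, (h _).eq, sub_self]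
  have hleft : e * x * (1 - e) = 0 := by
    refine mul_mul_eq_zero_of_forall_mem_smul hI he he.one_sub (fun x => ?_) x
    convert hcomm (x * (1 - e)) using 1
    rw [mul_assoc, mul_assoc, he.one_sub_mul_self, mul_zero, sub_zero]
  have hright : (1 - e) * x * e = 0 := by
    refine mul_mul_eq_zero_of_forall_mem_smul hI he.one_sub he (fun x => ?_) x
    convert Submodule.neg_mem _ (hcomm ((1 - e) * x)) using 1
    rw [← mul_assoc, he.mul_one_sub_self, zero_mul, zero_sub, neg_neg]
  calc e * x = e * x * e := by rwa [mul_sub, mul_one, sub_eq_zero] at hleft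
    _ = x * e := by rwa [sub_mul, sub_mul, one_mul, sub_eq_zero, eq_comm] at hright

end FiniteAlgebra

section SplitAlgebra

variable {K : Type u} [Field K] {B C : Type v} [Ring B] [Algebra K B] [Ring C] [Algebra K C]

theorem IsSplitAlgebra.of_surjective (hB : IsSplitAlgebra K B) (π : B →ₐ[K] C)
    (hπ : Function.Surjective π) : IsSplitAlgebra K C := by
  intro S _ _ hS f
  let _ : Module B S := Module.compHom S π.toRingHom
  have : RingHomSurjective π.toRingHom := ⟨hπ⟩
  let toBase : S →ₛₗ[π.toRingHom] S := { AddMonoidHom.id S with map_smul' := fun _ _ => rfl }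
  have hSB : IsSimpleModule B S :=
    (LinearMap.isSimpleModule_iff_of_bijective toBase Function.bijective_id).mpr hS
  obtain ⟨k, hk⟩ := hB S hSB { f with map_smul' := fun b s => f.map_smul (π b) s }
  refine ⟨k, fun s => (hk s).trans ?_⟩
  change π (algebraMap K B k) • s = _
  rw [π.commutes]

theorem IsSplitAlgebra.bijective_algebraMap_end_mulOpposite (hC : IsSplitAlgebra K C)
    (S : Type v) [AddCommGroup S] [Module C S] [Module K S] [IsScalarTower K C S]
    [IsSimpleModule C S] :
    Function.Bijective (algebraMap K (Module.End C S)ᵐᵒᵖ) := by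
  have : Nontrivial S := IsSimpleModule.nontrivial C S
  refine ⟨(algebraMap K (Module.End C S)ᵐᵒᵖ).injective, fun f => ?_⟩
  obtain ⟨k, hk⟩ := hC S inferInstance f.unop
  refine ⟨k, MulOpposite.unop_injective (LinearMap.ext fun s => ?_)⟩
  rw [hk, algebraMap_smul]
  rfl

theorem IsSplitAlgebra.exists_algEquiv_pi_end [IsSemisimpleRing C] (hC : IsSplitAlgebra K C) :
    ∃ (n : ℕ) (d : Fin n → ℕ),
      Nonempty (C ≃ₐ[K] ((i : Fin n) → Module.End K (Fin (d i) → K))) := by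
  obtain ⟨n, S, d, hS, -, ⟨e⟩⟩ :=
    IsSemisimpleRing.exists_algEquiv_pi_matrix_end_mulOpposite K C
  have scalars (i : Fin n) : K ≃ₐ[K] (Module.End C (S i))ᵐᵒᵖ :=
    .ofBijective (Algebra.ofId K _) (hC.bijective_algebraMap_end_mulOpposite (S i))
  exact ⟨n, d, ⟨e.trans (.piCongrRight fun i =>
    (scalars i).symm.mapMatrix.trans Matrix.toLinAlgEquiv')⟩⟩

theorem IsSplitAlgebra.exists_surjective_pi_end [IsSemiprimaryRing B] (hB : IsSplitAlgebra K B) :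
    ∃ (n : ℕ) (d : Fin n → ℕ) (Ψ : B →ₐ[K] ((i : Fin n) → Module.End K (Fin (d i) → K))),
      Function.Surjective Ψ ∧ ∀ x, Ψ x = 0 → IsNilpotent x := by
  let π : B →ₐ[K] B ⧸ Ring.jacobson B := Ideal.Quotient.mkₐ K (Ring.jacobson B)
  have hπ : Function.Surjective π := Ideal.Quotient.mk_surjective
  obtain ⟨n, d, ⟨e⟩⟩ := (hB.of_surjective π hπ).exists_algEquiv_pi_end
  refine ⟨n, d, e.toAlgHom.comp π, e.surjective.comp hπ, fun x hx => ?_⟩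
  have hx : π x = 0 := (map_eq_zero_iff e e.injective).mp hx
  exact isNilpotent_of_mem_ringJacobson (Ideal.Quotient.eq_zero_iff_mem.mp hx)

end SplitAlgebra

section LiftModScalars

variable {R : Type*} [CommRing R]

/-- Idempotents of the `R`-algebra `Λ` lift modulo every principal ideal of `R`: an element which
is idempotent modulo `r` is congruent modulo `r` to an idempotent. -/
def LiftsIdempotentsModScalars (R Λ : Type*) [CommRing R] [Ring Λ] [Algebra R Λ] : Prop :=
  ∀ (r : R) (a y : Λ), a * a - a = r • y → ∃ e, IsIdempotentElem e ∧ ∃ z, e - a = r • z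

theorem LiftsIdempotentsModScalars.pi {ι : Type*} {Λ : ι → Type*} [∀ i, Ring (Λ i)]
    [∀ i, Algebra R (Λ i)] (h : ∀ i, LiftsIdempotentsModScalars R (Λ i)) :
    LiftsIdempotentsModScalars R (∀ i, Λ i) := by
  intro r a y hay
  choose e he z hz using fun i => h i r (a i) (y i) (congrFun hay i)
  exact ⟨e, funext he, z, funext hz⟩

-- Over a local ring some basis of `L` consists of elements `a l` and `l - a l`; the idempotent
-- fixes the former and kills the latter.
theorem liftsIdempotentsModScalars_end [IsLocalRing R] (L : Type*) [AddCommGroup L] [Module R L]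
    [Module.Finite R L] [Module.Free R L] : LiftsIdempotentsModScalars R (Module.End R L) := by
  intro r a y hay
  have hy (l : L) : a (a l) - a l = r • y l := LinearMap.congr_fun hay l
  have hspan : ⊤ ≤ Submodule.span R
      (Set.range (Sum.elim (fun l : L => a l) (fun l : L => l - a l))) := by
    intro l _
    rw [← add_sub_cancel (a l) l]
    exact Submodule.add_mem _ (Submodule.subset_span ⟨.inl l, rfl⟩)
      (Submodule.subset_span ⟨.inr l, rfl⟩)
  have : Module.FinitePresentation R L := Module.finitePresentation_of_projective R L
  obtain ⟨κ, s, b, hb⟩ := Module.exists_basis_of_span_of_flat _ (top_le_iff.mp hspan)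
  refine ⟨b.constr R fun k => Sum.elim (fun _ => b k) (fun _ => 0) (s k),
    b.ext fun k => ?_, b.constr R fun k => Sum.elim (fun l => -y l) (fun l => y l) (s k),
    b.ext fun k => ?_⟩
  · rw [Module.End.mul_apply, b.constr_basis]
    rcases hk : s k with l | l <;> simp [hk]
  · rw [LinearMap.sub_apply, LinearMap.smul_apply, b.constr_basis, b.constr_basis, hb]
    cases s k <;> simp [← hy]

variable {A Λ C : Type*} [Ring A] [Algebra R A] [Ring Λ] [Algebra R Λ] [Ring C]

theorem exists_mul_self_sub_self_eq_pow_smul {p : R} {a y : A} (h : a * a - a = p • y) (n : ℕ) :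
    ∃ b z w : A, b - a = p • z ∧ b * b - b = p ^ (n + 1) • w := by
  induction n with
  | zero => exact ⟨a, 0, y, by simp, by simpa using h⟩
  | succ n ih =>
    obtain ⟨b, z, w, hba, hb⟩ := ih
    -- Newton's iteration for the polynomial `X ^ 2 - X`.
    let b' := 3 * b * b - 2 * b * b * b
    have hb'_sub : b' - a = (b - a) - (2 * b - 1) * (b * b - b) := by
      simp only [b']; noncomm_ring
    have hb'_mul : b' * b' - b' = (4 * b * b - 4 * b - 3) * ((b * b - b) * (b * b - b)) := by
      simp only [b']; noncomm_ring
    refine ⟨b', z - (2 * b - 1) * (p ^ n • w),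
      (4 * b * b - 4 * b - 3) * (p ^ n • (w * w)), ?_, ?_⟩
    · rw [hb'_sub, hba, hb, smul_sub, ← mul_smul_comm, smul_smul, pow_succ']
    · rw [hb'_mul, hb, ← mul_smul_comm, smul_smul, smul_mul_smul_comm, ← pow_add, ← pow_add]
      congr 3
      lia

theorem mul_add_one_sub_mul_one_sub {e : A} (he : IsIdempotentElem e) (x : A) :
    e * x + (1 - e) * (1 - x) = 1 + (2 * e - 1) * (x - e) := by
  calc e * x + (1 - e) * (1 - x) = 1 + (2 * e - 1) * (x - e) + 2 * (e * e - e) := by noncomm_ring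
    _ = 1 + (2 * e - 1) * (x - e) := by rw [he.eq, sub_self, mul_zero, add_zero]

theorem idempotentSurjective_of_liftsIdempotentsModScalars
    (hΛ : LiftsIdempotentsModScalars R Λ) {ψ : A →ₐ[R] Λ}
    (hnil : ∀ x, ψ x = 0 → IsNilpotent x) {p : R} {c : ℕ}
    (hc : ∀ l : Λ, p ^ c • l ∈ LinearMap.range ψ.toLinearMap)
    {φ : A →+* C} [IsLocalHom φ] (hs : Function.Surjective φ)
    (hφ : ∀ x, φ x = 0 ↔ ∃ y, x = p • y) : IdempotentSurjective φ := by
  intro f hf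
  obtain ⟨a, rfl⟩ := hs f
  obtain ⟨y, hy⟩ := (hφ (a * a - a)).mp (by rw [map_sub, map_mul, hf.eq, sub_self])
  obtain ⟨b, z, w, hba, hb⟩ := exists_mul_self_sub_self_eq_pow_smul hy c
  obtain ⟨l, hl, z', hz'⟩ := hΛ (p ^ (c + 1)) (ψ b) (ψ w)
    (by rw [← map_mul, ← map_sub, hb, map_smul])
  obtain ⟨x, hx : ψ x = _⟩ := hc z'
  have hψ : ψ (b + p • x) = l := by
    rw [map_add, map_smul, hx, smul_smul, ← pow_succ', ← hz', add_sub_cancel]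
  obtain ⟨e, he, hel : ψ e = l⟩ :=
    exists_isIdempotentElem_eq_of_ker_isNilpotent (ψ : A →+* Λ)
      (fun x hx => hnil x hx) l ⟨_, hψ⟩ hl
  have hφa : φ (b + p • x) = φ a := by
    rw [← sub_eq_zero, ← map_sub, hφ]
    exact ⟨z + x, by rw [smul_add, ← hba]; abel⟩
  let k := (2 * e - 1) * (b + p • x - e)
  have hk : IsNilpotent k := hnil k <| by
    rw [map_mul, map_sub ψ _ e, hψ, hel, sub_self, mul_zero]
  refine exists_isIdempotentElem_map_eq_of_isUnit he hf ?_
  have hφk : φ (e * a + (1 - e) * (1 - a)) = φ (1 + k) := by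
    simp only [← mul_add_one_sub_mul_one_sub he, k, map_add φ (e * _), map_mul, map_sub, map_one,
      hφa]
  exact hφk ▸ hk.isUnit_one_add.map φ

end LiftModScalars

section Lattices

variable {R K A V : Type*} [CommRing R] [Field K] [Algebra R K] [Ring A] [Algebra R A]
  [AddCommGroup V] [Module K V] [Module R V] [IsScalarTower R K V]

theorem exists_isLattice_invariant [Module.Finite R A] [Module.Finite K V]
    (ρ : A →ₐ[R] Module.End K V) :
    ∃ L : Submodule R V, L.IsLattice K ∧ ∀ a, ∀ v ∈ L, ρ a v ∈ L := by
  let b := Module.finBasis K V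
  let act : A →ₗ[R] V →ₗ[R] V := LinearMap.mk₂ R (fun a v => ρ a v)
    (by simp) (by simp) (by simp) (by simp)
  let L₀ : Submodule R V := Submodule.span R (Set.range b)
  have hL₀ : L₀ ≤ Submodule.map₂ act ⊤ L₀ := fun v hv => by
    simpa [act] using Submodule.apply_mem_map₂ act (Submodule.mem_top (x := 1)) hv
  refine ⟨Submodule.map₂ act ⊤ L₀, ⟨?_, ?_⟩, fun a => ?_⟩
  · exact Module.Finite.fg_top.map₂ act (Submodule.fg_span (Set.finite_range b))
  · rw [← top_le_iff, ← b.span_eq]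
    exact Submodule.span_mono (Submodule.subset_span.trans hL₀)
  · change Submodule.map₂ act ⊤ L₀ ≤ (Submodule.map₂ act ⊤ L₀).comap (act a)
    refine Submodule.map₂_le.mpr fun x _ v hv => ?_
    have hax : act a (act x v) = act (a * x) v := by simp [act]
    rw [Submodule.mem_comap, hax]
    exact Submodule.apply_mem_map₂ act Submodule.mem_top hv

/-- The action of `A` on an `R`-lattice `L` of the `K`-linear representation `V` that is stable
under `A`. -/
def restrictInvariant (ρ : A →ₐ[R] Module.End K V) (L : Submodule R V)
    (hL : ∀ a, ∀ v ∈ L, ρ a v ∈ L) : A →ₐ[R] Module.End R L :=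
  AlgHom.ofLinearMap
    { toFun a := ((ρ a).restrictScalars R).restrict (hL a)
      map_add' a b := by ext v; exact LinearMap.congr_fun (map_add ρ a b) v
      map_smul' r a := by ext v; exact LinearMap.congr_fun (map_smul ρ r a) v }
    (by ext v; exact LinearMap.congr_fun (map_one ρ) v)
    (fun a b => by ext v; exact LinearMap.congr_fun (map_mul ρ a b) v)

theorem coe_restrictInvariant_apply (ρ : A →ₐ[R] Module.End K V) {L : Submodule R V}
    (hL : ∀ a, ∀ v ∈ L, ρ a v ∈ L) (a : A) (v : L) :
    (restrictInvariant ρ L hL a v : V) = ρ a v := rfl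

theorem restrictInvariant_eq_zero_iff (ρ : A →ₐ[R] Module.End K V) {L : Submodule R V}
    [L.IsLattice K] (hL : ∀ a, ∀ v ∈ L, ρ a v ∈ L) {a : A} :
    restrictInvariant ρ L hL a = 0 ↔ ρ a = 0 := by
  refine ⟨fun h => LinearMap.ext_on (Submodule.IsLattice.span_eq_top (M := L)) fun v hv => ?_,
    fun h => ?_⟩
  · exact congrArg Subtype.val (LinearMap.congr_fun h ⟨v, hv⟩)
  · ext v
    rw [coe_restrictInvariant_apply, h]
    rfl

theorem exists_extend_of_isLattice [IsFractionRing R K] (L : Submodule R V) [L.IsLattice K]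
    [Module.Free R L] (l : Module.End R L) :
    ∃ g : Module.End K V, ∀ v : L, g v = l v := by
  let b := Module.Free.chooseBasis R L
  let g : Module.End K V := (b.extendOfIsLattice K).constr K fun i => (l (b i) : V)
  have hg : g.restrictScalars R ∘ₗ L.subtype = L.subtype ∘ₗ l := by
    refine b.ext fun i => ?_
    have := (b.extendOfIsLattice K).constr_basis K (fun i => (l (b i) : V)) i
    rwa [Module.Basis.extendOfIsLattice_apply] at this
  exact ⟨g, LinearMap.congr_fun hg⟩

end Lattices

section BoundedTorsion

variable {R : Type*} [CommRing R] [IsDomain R] [IsDiscreteValuationRing R]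

theorem exists_pow_smul_eq_zero_of_isTorsion {M : Type*} [AddCommGroup M] [Module R M]
    [Module.Finite R M] (hM : Module.IsTorsion R M) {p : R} (hp : Irreducible p) :
    ∃ c : ℕ, ∀ x : M, p ^ c • x = 0 := by
  obtain ⟨s, hs, hs0⟩ := Submodule.annihilator_top_inter_nonZeroDivisors hM
  obtain ⟨c, hc⟩ := IsDiscreteValuationRing.associated_pow_irreducible
    (nonZeroDivisors.ne_zero hs0) hp
  refine ⟨c, fun x => ?_⟩
  obtain ⟨u, hu⟩ := hc.dvd
  rw [hu, mul_comm, mul_smul, Submodule.mem_annihilator.mp hs x Submodule.mem_top, smul_zero]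

theorem exists_pow_smul_mem_of_forall_exists_smul_mem {M : Type*} [AddCommGroup M] [Module R M]
    [Module.Finite R M] {N : Submodule R M} (hN : ∀ x, ∃ s : nonZeroDivisors R, s • x ∈ N)
    {p : R} (hp : Irreducible p) : ∃ c : ℕ, ∀ x, p ^ c • x ∈ N := by
  have htors : Module.IsTorsion R (M ⧸ N) := by
    intro y
    obtain ⟨x, rfl⟩ := Submodule.Quotient.mk_surjective _ y
    obtain ⟨s, hs⟩ := hN x
    exact ⟨s, (Submodule.Quotient.mk_eq_zero N).mpr hs⟩
  obtain ⟨c, hc⟩ := exists_pow_smul_eq_zero_of_isTorsion htors hp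
  exact ⟨c, fun x => (Submodule.Quotient.mk_eq_zero N).mp (hc (Submodule.Quotient.mk x))⟩

end BoundedTorsion

section GenericFiber

variable {R K A ι : Type*} [CommRing R] [Field K] [Algebra R K] [IsFractionRing R K]
  [Ring A] [Algebra R A] {V : ι → Type*} [∀ i, AddCommGroup (V i)] [∀ i, Module K (V i)]
  [∀ i, Module R (V i)] [∀ i, IsScalarTower R K (V i)]

/-- The action of `A` on the `i`-th factor of a product of matrix algebras over `K`, given a map
`Ψ` from the generic fiber `K ⊗[R] A` to the product. -/
def componentRep (Ψ : K ⊗[R] A →ₐ[K] ((i : ι) → Module.End K (V i))) (i : ι) :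
    A →ₐ[R] Module.End K (V i) :=
  (Pi.evalAlgHom R _ i).comp
    ((Ψ.restrictScalars R).comp Algebra.TensorProduct.includeRight)

variable {Ψ : K ⊗[R] A →ₐ[K] ((i : ι) → Module.End K (V i))} {L : (i : ι) → Submodule R (V i)}
  [∀ i, (L i).IsLattice K] (hL : ∀ i a, ∀ v ∈ L i, componentRep Ψ i a v ∈ L i)

theorem isNilpotent_of_restrictInvariant_eq_zero [Module.Flat R A]
    (hΨ : ∀ x, Ψ x = 0 → IsNilpotent x) {a : A}
    (ha : AlgHom.pi (fun i => restrictInvariant (componentRep Ψ i) (L i) (hL i)) a = 0) :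
    IsNilpotent a := by
  have hinj : Function.Injective (Algebra.TensorProduct.includeRight : A →ₐ[R] K ⊗[R] A) :=
    Algebra.TensorProduct.includeRight_injective (IsFractionRing.injective R K)
  refine (IsNilpotent.map_iff hinj).mp (hΨ _ (funext fun i => ?_))
  exact (restrictInvariant_eq_zero_iff _ (hL i)).mp (congrFun ha i)

theorem exists_smul_mem_range_restrictInvariant [∀ i, Module.Free R (L i)]
    (hΨ : Function.Surjective Ψ) (l : (i : ι) → Module.End R (L i)) :
    ∃ s : nonZeroDivisors R, s • l ∈ LinearMap.range
      (AlgHom.pi fun i => restrictInvariant (componentRep Ψ i) (L i) (hL i)).toLinearMap := by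
  choose g hg using fun i => exists_extend_of_isLattice (K := K) (L i) (l i)
  obtain ⟨y, rfl⟩ := hΨ g
  obtain ⟨⟨x, s⟩, hs : (s : R) • y = 1 ⊗ₜ x⟩ := IsLocalizedModule.surj (nonZeroDivisors R)
    (TensorProduct.mk R K A 1) y
  refine ⟨s, x, ?_⟩
  ext i v : 3
  change Ψ (1 ⊗ₜ x) i v = (s : R) • (l i v : V i)
  rw [← hs, ← hg, show Ψ ((s : R) • y) = (s : R) • Ψ y from map_smul (Ψ.restrictScalars R) _ _]
  rfl

end GenericFiber

section IdempotentLifting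

variable {R : Type*} {K : Type u} {A : Type*} [CommRing R] [IsDomain R]
  [IsDiscreteValuationRing R] [Field K] [Algebra R K] [IsFractionRing R K] [Ring A] [Algebra R A]

theorem includeRight_residue_eq_zero_iff {p : R} (hp : Irreducible p) {a : A} :
    (Algebra.TensorProduct.includeRight a : (R ⧸ IsLocalRing.maximalIdeal R) ⊗[R] A) = 0 ↔
      ∃ y, a = p • y := by
  rw [includeRight_eq_zero_iff, hp.maximalIdeal_eq, Submodule.ideal_span_singleton_smul,
    Submodule.mem_smul_pointwise_iff_exists]
  simp only [Submodule.mem_top, true_and, eq_comm]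

theorem idempotentSurjective_of_isSplitAlgebra [Module.Finite R A] [Module.Flat R A]
    (hsplit : IsSplitAlgebra K (K ⊗[R] A)) :
    IdempotentSurjective (Algebra.TensorProduct.includeRight :
      A →ₐ[R] (R ⧸ IsLocalRing.maximalIdeal R) ⊗[R] A).toRingHom := by
  have : IsArtinianRing (K ⊗[R] A) := IsArtinianRing.of_finite K _
  obtain ⟨n, d, Ψ, hΨs, hΨn⟩ := hsplit.exists_surjective_pi_end
  choose L _ hL using fun i => exists_isLattice_invariant (componentRep Ψ i)
  obtain ⟨p, hp⟩ := IsDiscreteValuationRing.exists_irreducible R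
  obtain ⟨c, hc⟩ := exists_pow_smul_mem_of_forall_exists_smul_mem
    (exists_smul_mem_range_restrictInvariant hL hΨs) hp
  have := isLocalHom_includeRight (A := A) (IsLocalRing.maximalIdeal_le_jacobson (R := R) ⊥)
  exact idempotentSurjective_of_liftsIdempotentsModScalars
    (.pi fun i => liftsIdempotentsModScalars_end (L i))
    (fun _ => isNilpotent_of_restrictInvariant_eq_zero hL hΨn) hc
    (Algebra.TensorProduct.includeRight_surjective A Ideal.Quotient.mk_surjective)
    fun _ => includeRight_residue_eq_zero_iff hp

end IdempotentLifting

/-- **Corollary `algebra_dvr_semiperfect`.** A finite flat algebra `A` over a discrete valuation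
ring `R` with split generic fiber is semiperfect; in particular the quotient map
`A → A/mA = κ ⊗[R] A` is idempotent surjective, induces a bijection of isomorphism classes of
primitive idempotents, and is block bijective. -/
theorem stmt18 (R : Type u) [CommRing R] [IsDomain R] [IsDiscreteValuationRing R]
    (A : Type u) [Ring A] [Algebra R A] [Module.Finite R A] [Module.Flat R A]
    (hsplit : IsSplitAlgebra (FractionRing R) (FractionRing R ⊗[R] A)) :
    IsSemiperfect A ∧
    (∀ f : (R ⧸ IsLocalRing.maximalIdeal R) ⊗[R] A, IsIdempotentElem f →
      ∃ e : A, IsIdempotentElem e ∧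
        (Algebra.TensorProduct.includeRight e :
          (R ⧸ IsLocalRing.maximalIdeal R) ⊗[R] A) = f) ∧
    PrimIdemBijective (fun a : A => (Algebra.TensorProduct.includeRight a :
      (R ⧸ IsLocalRing.maximalIdeal R) ⊗[R] A)) ∧
    BlockBijective (fun a : A => (Algebra.TensorProduct.includeRight a :
      (R ⧸ IsLocalRing.maximalIdeal R) ⊗[R] A)) := by
  let _ : Field (R ⧸ IsLocalRing.maximalIdeal R) := Ideal.Quotient.field _
  have : IsArtinianRing ((R ⧸ IsLocalRing.maximalIdeal R) ⊗[R] A) :=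
    IsArtinianRing.of_finite (R ⧸ IsLocalRing.maximalIdeal R) _
  have hm := IsLocalRing.maximalIdeal_le_jacobson (⊥ : Ideal R)
  have hlocal := isLocalHom_includeRight (A := A) hm
  have hs := Algebra.TensorProduct.includeRight_surjective A
    (Ideal.Quotient.mk_surjective (I := IsLocalRing.maximalIdeal R))
  have hlift := idempotentSurjective_of_isSplitAlgebra hsplit
  exact ⟨hlift.isSemiperfect hs, hlift, hlift.primIdemBijective hs,
    hlift.blockBijective hs fun _ => commute_of_commute_includeRight hm⟩
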